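/- arXiv:2102.04373 — 2 statements merged into one kernel-verified Lean document; each statement's English description precedes it below -/
import Mathlib

section
/- If LB⁰ ≤ wᵀx + b ≤ UB⁰ holds for all feasible x, with LB⁰ < 0 < UB⁰, then y = max(0, wᵀx + b) if and only if there exists σ ∈ {0,1} such that y ≥ wᵀx + b, y ≤ wᵀx + b - (1-σ)·LB⁰, y ≤ σ·UB⁰, and y ≥ 0. -/
/-!
`y = max 0 t` says that `y` is an upper bound of `0` and `t` that lies below one of them. The big-M
constraints encode this last disjunction: `σ` selects the inequality to be enforced, and the bounds
`L ≤ t ≤ U` ensure that the other, relaxed one already follows from it.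
-/

theorem eq_max_iff_le_and_le_and_le_or_le {α : Type*} [LinearOrder α] {a b c : α} :
    c = max a b ↔ a ≤ c ∧ b ≤ c ∧ (c ≤ a ∨ c ≤ b) := by
  rw [le_antisymm_iff, le_max_iff, max_le_iff, and_comm, and_assoc]

section BigM

variable {R : Type*} [Ring R] [LinearOrder R]

theorem exists_bigM_iff_le_or_le {a c y M N : R} (hM : c ≤ a + M) (hN : a ≤ c + N) :
    (∃ σ : R, (σ = 0 ∨ σ = 1) ∧ y ≤ a + (1 - σ) * M ∧ y ≤ c + σ * N) ↔ y ≤ a ∨ y ≤ c := by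
  have relaxed_of_le_c : y ≤ c → y ≤ a + M := fun h ↦ h.trans hM
  have relaxed_of_le_a : y ≤ a → y ≤ c + N := fun h ↦ h.trans hN
  simp only [exists_eq_or_imp, exists_eq_left, sub_zero, sub_self, one_mul, zero_mul, add_zero,
    and_iff_right_of_imp relaxed_of_le_c, and_iff_left_of_imp relaxed_of_le_a]
  exact or_comm

theorem stmt_1_general [IsOrderedAddMonoid R] {t y L U : R} (hL : L ≤ t) (hU : t ≤ U) :
    y = max 0 t ↔
      ∃ σ : R, (σ = 0 ∨ σ = 1) ∧ y ≥ t ∧ y ≤ t - (1 - σ) * L ∧ y ≤ σ * U ∧ y ≥ 0 := by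
  have bigM : (∃ σ : R, (σ = 0 ∨ σ = 1) ∧ y ≤ t - (1 - σ) * L ∧ y ≤ σ * U) ↔ y ≤ t ∨ y ≤ 0 := by
    have hM : 0 ≤ t + -L := by rwa [← sub_eq_add_neg, sub_nonneg]
    have hN : t ≤ 0 + U := by rwa [zero_add]
    simpa only [mul_neg, ← sub_eq_add_neg, zero_add] using exists_bigM_iff_le_or_le hM hN
  rw [eq_max_iff_le_and_le_and_le_or_le, or_comm, ← bigM]
  constructor
  · rintro ⟨nonneg, le_y, σ, binary, le_sub, le_mul⟩
    exact ⟨σ, binary, le_y, le_sub, le_mul, nonneg⟩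
  · rintro ⟨σ, binary, le_y, le_sub, le_mul, nonneg⟩
    exact ⟨nonneg, le_y, σ, binary, le_sub, le_mul⟩

end BigM

/-- Correctness of the big-M MILP formulation of a ReLU node. -/
theorem stmt_1 (η : ℕ) (w : Fin η → ℝ) (b LB UB : ℝ) (x : Fin η → ℝ) (y : ℝ)
    (hLB : LB < 0) (hUB : 0 < UB)
    (h1 : LB ≤ (∑ i, w i * x i) + b) (h2 : (∑ i, w i * x i) + b ≤ UB) :
    y = max 0 ((∑ i, w i * x i) + b) ↔
      ∃ σ : ℝ, (σ = 0 ∨ σ = 1) ∧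
        y ≥ (∑ i, w i * x i) + b ∧
        y ≤ (∑ i, w i * x i) + b - (1 - σ) * LB ∧
        y ≤ σ * UB ∧
        y ≥ 0 :=
  stmt_1_general h1 h2
end

section
/- In the Fourier–Motzkin elimination of zₙᵇ from the partitioned ReLU relaxation, every lower-bounding inequality on y of the form y ≥ Σ_{i∈I'_j} w_i x_i − σ Σ_{i∈I'_j} UB_i + (1−σ)(b + Σ_{i∈I∖I'_j} LB_i) is implied (for σ ∈ {0,1}) by the two inequalities y ≥ wᵀx + b and y ≥ 0, given that LB_i ≤ w_i x_i ≤ UB_i for all i. -/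
/-!
The right-hand side is affine in `σ`: it is the convex combination, with weights `σ` and `1 - σ`,
of its values at `σ = 1` and `σ = 0`. The former is at most `0` by the upper bounds on `I'`, the
latter at most `wᵀx + b` by the lower bounds off `I'`.
-/

theorem sum_add_sum_compl_le_sum {ι M : Type*} [Fintype ι] [DecidableEq ι] [AddCommMonoid M]
    [PartialOrder M] [IsOrderedAddMonoid M] {s : Finset ι} {f g : ι → M}
    (h : ∀ i ∉ s, f i ≤ g i) :
    ∑ i ∈ s, g i + ∑ i ∈ sᶜ, f i ≤ ∑ i, g i := by
  rw [← Finset.sum_add_sum_compl s g]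
  gcongr with i hi
  exact h i (Finset.mem_compl.mp hi)

theorem sub_mul_add_one_sub_mul_le {R : Type*} [Ring R] [PartialOrder R] [IsOrderedRing R]
    {a u c y σ : R} (hσ : σ ∈ Set.Icc 0 1) (h_one : a - u ≤ y) (h_zero : a + c ≤ y) :
    a - σ * u + (1 - σ) * c ≤ y :=
  calc
    a - σ * u + (1 - σ) * c = σ • (a - u) + (1 - σ) • (a + c) := by
      simp only [smul_eq_mul]
      noncomm_ring
    _ ≤ y := convex_Iic y h_one h_zero hσ.1 (sub_nonneg.mpr hσ.2) (add_sub_cancel σ 1)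

theorem stmt_7_general {ι R : Type*} [Fintype ι] [DecidableEq ι] [Ring R] [PartialOrder R]
    [IsOrderedRing R] {a LB UB : ι → R} {b y σ : R} (hσ : σ ∈ Set.Icc 0 1) {s : Finset ι}
    (hUB : ∀ i ∈ s, a i ≤ UB i) (hLB : ∀ i ∉ s, LB i ≤ a i)
    (h_affine : ∑ i, a i + b ≤ y) (hy : 0 ≤ y) :
    ∑ i ∈ s, a i - σ * ∑ i ∈ s, UB i + (1 - σ) * (b + ∑ i ∈ sᶜ, LB i) ≤ y := by
  have h_one : ∑ i ∈ s, a i - ∑ i ∈ s, UB i ≤ y :=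
    (sub_nonpos.mpr (Finset.sum_le_sum hUB)).trans hy
  have h_zero : ∑ i ∈ s, a i + (b + ∑ i ∈ sᶜ, LB i) ≤ y :=
    calc
      ∑ i ∈ s, a i + (b + ∑ i ∈ sᶜ, LB i) = ∑ i ∈ s, a i + ∑ i ∈ sᶜ, LB i + b := by abel
      _ ≤ ∑ i, a i + b := by gcongr; exact sum_add_sum_compl_le_sum hLB
      _ ≤ y := h_affine
  exact sub_mul_add_one_sub_mul_le hσ h_one h_zero

/-- Redundancy of the lower-bounding inequalities produced by Fourier–Motzkin
elimination in the partitioned ReLU relaxation (appendix A.2). -/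
theorem stmt_7 (η : ℕ) (w : Fin η → ℝ) (b : ℝ) (LB UB : Fin η → ℝ)
    (x : Fin η → ℝ) (y σ : ℝ)
    (hσ : σ = 0 ∨ σ = 1)
    (hbounds : ∀ i, LB i ≤ w i * x i ∧ w i * x i ≤ UB i)
    (I' : Finset (Fin η))
    (h1 : y ≥ (∑ i, w i * x i) + b)
    (h2 : y ≥ 0) :
    y ≥ (∑ i ∈ I', w i * x i) - σ * (∑ i ∈ I', UB i)
          + (1 - σ) * (b + ∑ i ∈ I'ᶜ, LB i) := by
  have hσ_mem : σ ∈ Set.Icc 0 1 := by rcases hσ with rfl | rfl <;> simp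
  exact stmt_7_general hσ_mem (fun i _ => (hbounds i).2) (fun i _ => (hbounds i).1) h1 h2
end
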